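/- arXiv:2310.03677 — 3 statements merged into one kernel-verified Lean document; each statement's English description precedes it below -/
import Mathlib

section
/- Let X be a uniformly locally finite metric space and R > 0, and set N := N_X(R). Then there exists a family T₁, …, T_{2N} of partial translations on X whose graphs are pairwise disjoint and satisfy {(x,y) ∈ X × X : d(x,y) ≤ R} = ⨆_{i=1}^{2N} graph(T_i). -/
/-!
Call two distinct pairs at distance at most `R` conflicting if they share a first or a second
coordinate. The required family is exactly a proper colouring of this conflict graph with `2 * N`
colours, the sets `G i` being the colour classes. A pair `(x, y)` conflicts with at most `N - 1`
pairs `(x, z)` and at most `N - 1` pairs `(z, y)`, so a greedy colouring along a well-order of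
`X × X` never runs out of colours (`exists_greedy_coloring`, `conflict_finite_ncard_lt`).
-/

noncomputable section

open scoped ENNReal

/-- Greedy colouring by transfinite recursion: if every vertex of a symmetric irreflexive relation
has fewer than `k` neighbours, then `k` colours suffice, whatever the cardinality of `V`. -/
theorem exists_greedy_coloring {V : Type*} (r : V → V → Prop) (hsymm : ∀ v w, r v w → r w v)
    (hirr : ∀ v, ¬ r v v) (k : ℕ) (hk : ∀ v, {w | r w v}.Finite ∧ {w | r w v}.ncard < k) :
    ∃ c : V → Fin k, ∀ v w, r v w → c v ≠ c w := by
  classical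
  -- A colour is available at `v` once the smaller vertices are coloured.
  have step : ∀ (v : V) (f : ∀ w, WellOrderingRel w v → Fin k),
      ∃ a : Fin k, ∀ w (h : WellOrderingRel w v), r w v → f w h ≠ a := by
    intro v f
    obtain ⟨hfin, hlt⟩ := hk v
    have a₀ : Fin k := ⟨0, by omega⟩
    let g : V → Fin k := fun w => if h : WellOrderingRel w v then f w h else a₀
    have hcard : (hfin.toFinset.image g).card < (Finset.univ : Finset (Fin k)).card := by
      rw [Finset.card_univ, Fintype.card_fin]
      refine Finset.card_image_le.trans_lt ?_
      rwa [← Set.ncard_eq_toFinset_card _ hfin]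
    obtain ⟨a, -, ha⟩ := Finset.exists_mem_notMem_of_card_lt_card hcard
    refine ⟨a, fun w h hr hfa => ha ?_⟩
    rw [Finset.mem_image]
    exact ⟨w, by simpa using hr, by simp only [g, dif_pos h, hfa]⟩
  choose F hF using step
  have wf : WellFounded (WellOrderingRel : V → V → Prop) := IsWellFounded.wf
  have key : ∀ v w, WellOrderingRel w v → r w v → wf.fix F w ≠ wf.fix F v := by
    intro v w h hr
    rw [wf.fix_eq F v]
    exact hF v (fun y _ => wf.fix F y) w h hr
  refine ⟨wf.fix F, fun v w hr => ?_⟩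
  rcases trichotomous_of (WellOrderingRel : V → V → Prop) v w with h | h | h
  · exact key w v h hr
  · subst h
    exact (hirr v hr).elim
  · exact (key v w h (hsymm v w hr)).symm

/-- Two distinct pairs at distance at most `R` that agree in some coordinate, so that they cannot
both lie in the graph of one partial translation. -/
def Conflict {X : Type*} [MetricSpace X] (R : ℝ) (q p : X × X) : Prop :=
  q ≠ p ∧ dist q.1 q.2 ≤ R ∧ dist p.1 p.2 ≤ R ∧ (q.1 = p.1 ∨ q.2 = p.2)

theorem conflict_finite_ncard_lt {X : Type*} [MetricSpace X] (R : ℝ) (hR : 0 < R) (N : ℕ)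
    (hN : ∀ x : X, (Metric.closedBall x R).Finite ∧ (Metric.closedBall x R).ncard ≤ N)
    (p : X × X) : {q | Conflict R q p}.Finite ∧ {q | Conflict R q p}.ncard < 2 * N := by
  have hpos : 0 < N := by
    refine lt_of_lt_of_le ?_ (hN p.1).2
    exact (Set.ncard_pos (hN p.1).1).2 ⟨p.1, Metric.mem_closedBall_self hR.le⟩
  by_cases hp : dist p.1 p.2 ≤ R
  · set A := Metric.closedBall p.1 R \ {p.2} with hA
    set B := Metric.closedBall p.2 R \ {p.1} with hB
    have hAf : A.Finite := (hN p.1).1.sdiff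
    have hBf : B.Finite := (hN p.2).1.sdiff
    have hAc : A.ncard < N := lt_of_lt_of_le (Set.ncard_sdiff_singleton_lt_of_mem
      (by simpa [dist_comm] using hp) (hN p.1).1) (hN p.1).2
    have hBc : B.ncard < N := lt_of_lt_of_le (Set.ncard_sdiff_singleton_lt_of_mem
      (by simpa using hp) (hN p.2).1) (hN p.2).2
    have hsub : {q | Conflict R q p} ⊆ (fun z => (p.1, z)) '' A ∪ (fun z => (z, p.2)) '' B := by
      rintro ⟨x, y⟩ ⟨hne, hq, -, h | h⟩
      · simp only at h hq
        subst h
        refine Or.inl ⟨y, ⟨by simpa [dist_comm] using hq, fun hy => hne ?_⟩, rfl⟩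
        exact Prod.ext rfl hy
      · simp only at h hq
        subst h
        refine Or.inr ⟨x, ⟨by simpa using hq, fun hx => hne ?_⟩, rfl⟩
        exact Prod.ext hx rfl
    have hUf := (hAf.image (fun z => (p.1, z))).union (hBf.image (fun z => (z, p.2)))
    refine ⟨hUf.subset hsub, ?_⟩
    have h1 := Set.ncard_le_ncard hsub hUf
    have h2 := Set.ncard_union_le ((fun z => (p.1, z)) '' A) ((fun z => (z, p.2)) '' B)
    have h3 := Set.ncard_image_le (f := fun z => (p.1, z)) hAf
    have h4 := Set.ncard_image_le (f := fun z => (z, p.2)) hBf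
    omega
  · have he : {q | Conflict R q p} = ∅ := Set.eq_empty_of_forall_notMem fun q hq => hp hq.2.2.1
    rw [he, Set.ncard_empty]
    exact ⟨Set.finite_empty, by omega⟩

/-- Decomposition of the set {(x,y) : d(x,y) ≤ R} into the graphs of 2N partial
translations, where N = N_X(R). A partial translation is encoded by its graph: a set
G ⊆ X × X such that for p, q ∈ G, p.1 = q.1 ↔ p.2 = q.2 (i.e. G is the graph of a
bijection from a subset of X onto a subset of X). -/
theorem exists_partial_translation_decomposition
    (X : Type*) [MetricSpace X] (R : ℝ) (hR : 0 < R) (N : ℕ)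
    (hN : ∀ x : X, (Metric.closedBall x R).Finite ∧ (Metric.closedBall x R).ncard ≤ N) :
    ∃ G : Fin (2 * N) → Set (X × X),
      (∀ i, ∀ p ∈ G i, ∀ q ∈ G i, p.1 = q.1 ↔ p.2 = q.2) ∧
      (Pairwise fun i j => Disjoint (G i) (G j)) ∧
      (⋃ i, G i) = {p : X × X | dist p.1 p.2 ≤ R} := by
  obtain ⟨c, hc⟩ := exists_greedy_coloring (Conflict (X := X) R)
    (fun v w h => ⟨h.1.symm, h.2.2.1, h.2.1, h.2.2.2.imp Eq.symm Eq.symm⟩)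
    (fun v h => h.1 rfl) (2 * N) (conflict_finite_ncard_lt R hR N hN)
  refine ⟨fun i => {p | dist p.1 p.2 ≤ R ∧ c p = i}, ?_, ?_, ?_⟩
  · rintro i p ⟨hp, hpi⟩ q ⟨hq, hqi⟩
    have key : (p.1 = q.1 ∨ p.2 = q.2) → p = q := by
      intro h
      by_contra hne
      exact hc p q ⟨hne, hp, hq, h⟩ (hpi.trans hqi.symm)
    exact ⟨fun h => congrArg Prod.snd (key (Or.inl h)),
      fun h => congrArg Prod.fst (key (Or.inr h))⟩
  · intro i j hij
    exact Set.disjoint_left.2 fun p hp hq => hij (hp.2.symm.trans hq.2)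
  · ext p
    simp
end
end

section
/- Let Γ be a finite group and π : Γ → U(n) an irreducible unitary representation on ℂⁿ. Then for every function α : Γ → ℂ with |α_g| ≤ 1 for all g ∈ Γ, one has ‖ (1/|Γ|) Σ_{g∈Γ} α_g π(g) ‖ ≤ 1/√n, where the norm is the operator norm on ℂⁿ. -/
/-!
For a vector `v`, the positive operator `S x = ∑ g, ⟪π g v, x⟫ • π g v` commutes with the
representation, so by Schur's lemma (`exists_eigenvalue_of_commute`) it is a scalar; its trace is
`|Γ| ‖v‖²`, so the scalar is `|Γ| ‖v‖² / n`. This is the orthogonality relation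
`∑ g, |⟪π g v, w⟫|² = |Γ| ‖v‖² ‖w‖² / n` (`sum_norm_inner_sq`). For `y = ∑ g, α g • π g v`, the
bound `|α g| ≤ 1`, the Cauchy-Schwarz inequality and this relation with `w = y` give
`‖y‖⁴ ≤ (∑ g, |⟪π g v, y⟫|)² ≤ |Γ|² ‖v‖² ‖y‖² / n`, that is, `‖y‖ ≤ |Γ| ‖v‖ / √n`.
-/

noncomputable section

open scoped ENNReal

/-- A unitary representation π : Γ → U(n) is irreducible if the only subspaces of ℂⁿ
invariant under all π(g) are 0 and ℂⁿ. -/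
def IsIrreducibleRep {n : ℕ} {Γ : Type*} [Group Γ]
    (π : Γ →* Matrix.unitaryGroup (Fin n) ℂ) : Prop :=
  ∀ W : Submodule ℂ (EuclideanSpace ℂ (Fin n)),
    (∀ g : Γ, ∀ v ∈ W, Matrix.toEuclideanCLM (𝕜 := ℂ) (π g : Matrix (Fin n) (Fin n) ℂ) v ∈ W) →
    W = ⊥ ∨ W = ⊤

/-- The operator on `ℂⁿ` given by `π g`. -/
def repOp {n : ℕ} {Γ : Type*} [Group Γ] (π : Γ →* Matrix.unitaryGroup (Fin n) ℂ) (g : Γ) :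
    EuclideanSpace ℂ (Fin n) →L[ℂ] EuclideanSpace ℂ (Fin n) :=
  Matrix.toEuclideanCLM (𝕜 := ℂ) (π g : Matrix (Fin n) (Fin n) ℂ)

section

variable {n : ℕ} {Γ : Type*} [Group Γ] (π : Γ →* Matrix.unitaryGroup (Fin n) ℂ)

lemma repOp_mul_apply (g h : Γ) (v : EuclideanSpace ℂ (Fin n)) :
    repOp π (g * h) v = repOp π g (repOp π h v) := by
  simp [repOp]

lemma inner_repOp_repOp (g : Γ) (v w : EuclideanSpace ℂ (Fin n)) :
    inner ℂ (repOp π g v) (repOp π g w) = inner ℂ v w := by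
  have h : star (repOp π g) * repOp π g = 1 := by
    rw [repOp, ← map_star, ← map_mul, Unitary.coe_star_mul_self, map_one]
  rw [← ContinuousLinearMap.adjoint_inner_right, ← ContinuousLinearMap.star_eq_adjoint,
    ← mul_apply_eq_comp, h, one_apply_eq_self]

lemma norm_repOp (g : Γ) (v : EuclideanSpace ℂ (Fin n)) : ‖repOp π g v‖ = ‖v‖ := by
  rw [@norm_eq_sqrt_re_inner ℂ, inner_repOp_repOp, ← @norm_eq_sqrt_re_inner ℂ]

variable {π}

/-- **Schur's lemma**: an operator commuting with an irreducible representation is a scalar,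
because one of its eigenspaces is a nonzero invariant subspace. -/
lemma exists_eigenvalue_of_commute [NeZero n] (hirr : IsIrreducibleRep π)
    (S : Module.End ℂ (EuclideanSpace ℂ (Fin n)))
    (hS : ∀ g x, S (repOp π g x) = repOp π g (S x)) : ∃ c : ℂ, ∀ x, S x = c • x := by
  obtain ⟨c, hc⟩ := Module.End.exists_eigenvalue S
  refine ⟨c, fun x => ?_⟩
  have htop : Module.End.eigenspace S c = ⊤ := by
    refine (hirr _ fun g v hv => ?_).resolve_left hc
    change repOp π g v ∈ _
    rw [Module.End.mem_eigenspace_iff] at hv ⊢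
    rw [hS, hv, map_smul]
  exact Module.End.mem_eigenspace_iff.mp (htop ▸ Submodule.mem_top)

/-- The Schur orthogonality relation for a single matrix coefficient `g ↦ ⟪π g v, w⟫` of an
irreducible representation, with the dimension cleared from the denominator. -/
lemma sum_norm_inner_sq [NeZero n] [Fintype Γ] (hirr : IsIrreducibleRep π)
    (v w : EuclideanSpace ℂ (Fin n)) :
    n * ∑ g : Γ, ‖inner ℂ (repOp π g v) w‖ ^ 2 = Fintype.card Γ * ‖v‖ ^ 2 * ‖w‖ ^ 2 := by
  let S : Module.End ℂ (EuclideanSpace ℂ (Fin n)) :=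
    ∑ g : Γ, (InnerProductSpace.rankOne ℂ (repOp π g v) (repOp π g v)).toLinearMap
  have hSapp (x) : S x = ∑ g : Γ, inner ℂ (repOp π g v) x • repOp π g v := by
    simp [S, LinearMap.sum_apply]
  have hS (h x) : S (repOp π h x) = repOp π h (S x) := by
    rw [hSapp, hSapp, map_sum, ← Equiv.sum_comp (Equiv.mulLeft h)]
    simp only [Equiv.coe_mulLeft, repOp_mul_apply, inner_repOp_repOp, map_smul]
  obtain ⟨c, hc⟩ := exists_eigenvalue_of_commute hirr S hS
  -- Pairing `S x = c • x` with `x`; the left side is real, so only `c.re` matters.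
  have key (x : EuclideanSpace ℂ (Fin n)) :
      ∑ g : Γ, ‖inner ℂ (repOp π g v) x‖ ^ 2 = c.re * ‖x‖ ^ 2 := by
    have h : inner ℂ x (S x) = ((∑ g : Γ, ‖inner ℂ (repOp π g v) x‖ ^ 2 : ℝ) : ℂ) := by
      rw [hSapp, inner_sum, Complex.ofReal_sum]
      refine Finset.sum_congr rfl fun g _ => ?_
      rw [inner_smul_right, ← inner_conj_symm x, Complex.mul_conj, Complex.normSq_eq_norm_sq]
    rw [hc, inner_smul_right, inner_self_eq_norm_sq_to_K] at h
    have h := congrArg Complex.re h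
    rw [Complex.ofReal_re] at h
    rw [← h, ← RCLike.ofReal_pow]
    exact Complex.re_mul_ofReal c (‖x‖ ^ 2)
  -- The trace of `S`, computed in the standard basis.
  have htr : c.re * n = Fintype.card Γ * ‖v‖ ^ 2 := by
    let b := EuclideanSpace.basisFun (Fin n) ℂ
    calc c.re * n = ∑ i, ∑ g : Γ, ‖inner ℂ (repOp π g v) (b i)‖ ^ 2 := by
          simp [key, mul_comm]
      _ = ∑ g : Γ, ‖repOp π g v‖ ^ 2 := by
          rw [Finset.sum_comm]
          exact Finset.sum_congr rfl fun g _ => b.sum_sq_norm_inner_left _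
      _ = Fintype.card Γ * ‖v‖ ^ 2 := by simp [norm_repOp]
  rw [key, ← htr]
  ring

lemma norm_sum_smul_repOp_le [NeZero n] [Fintype Γ] (hirr : IsIrreducibleRep π)
    (α : Γ → ℂ) (hα : ∀ g : Γ, ‖α g‖ ≤ 1) (v : EuclideanSpace ℂ (Fin n)) :
    ‖∑ g : Γ, α g • repOp π g v‖ ≤ Fintype.card Γ / Real.sqrt n * ‖v‖ := by
  set y := ∑ g : Γ, α g • repOp π g v with hy
  have hn : (0 : ℝ) < n := Nat.cast_pos.mpr (NeZero.pos n)
  have h1 : ‖y‖ ^ 2 ≤ ∑ g : Γ, ‖inner ℂ (repOp π g v) y‖ := by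
    calc ‖y‖ ^ 2 = ‖inner ℂ y y‖ := by simp [inner_self_eq_norm_sq_to_K]
      _ = ‖∑ g : Γ, inner ℂ (α g • repOp π g v) y‖ := by rw [← sum_inner, ← hy]
      _ ≤ ∑ g : Γ, ‖inner ℂ (α g • repOp π g v) y‖ := norm_sum_le _ _
      _ ≤ _ := by
          refine Finset.sum_le_sum fun g _ => ?_
          rw [inner_smul_left, norm_mul, RCLike.norm_conj]
          exact mul_le_of_le_one_left (norm_nonneg _) (hα g)
  have h2 : (∑ g : Γ, ‖inner ℂ (repOp π g v) y‖) ^ 2 ≤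
      Fintype.card Γ * ∑ g : Γ, ‖inner ℂ (repOp π g v) y‖ ^ 2 := sq_sum_le_card_mul_sum_sq
  have h3 := sum_norm_inner_sq hirr v y
  have h4 : n * (‖y‖ ^ 2) ^ 2 ≤ (Fintype.card Γ * ‖v‖) ^ 2 * ‖y‖ ^ 2 := by
    calc n * (‖y‖ ^ 2) ^ 2
        ≤ n * (Fintype.card Γ * ∑ g : Γ, ‖inner ℂ (repOp π g v) y‖ ^ 2) := by
          gcongr
          exact (pow_le_pow_left₀ (sq_nonneg _) h1 2).trans h2
      _ = Fintype.card Γ * (n * ∑ g : Γ, ‖inner ℂ (repOp π g v) y‖ ^ 2) := by ring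
      _ = _ := by rw [h3]; ring
  rcases (norm_nonneg y).eq_or_lt with h0 | h0
  · rw [← h0]; positivity
  have h5 : n * ‖y‖ ^ 2 ≤ (Fintype.card Γ * ‖v‖) ^ 2 := by
    refine le_of_mul_le_mul_right ?_ (pow_pos h0 2)
    linarith
  rw [div_mul_eq_mul_div, le_div_iff₀ (Real.sqrt_pos.mpr hn)]
  refine (sq_le_sq₀ (by positivity) (by positivity)).mp ?_
  rw [mul_pow, Real.sq_sqrt hn.le]
  linarith

end

/-- For an irreducible unitary representation π of a finite group Γ on ℂⁿ and coefficients
|α_g| ≤ 1, the operator norm of (1/|Γ|) Σ_g α_g π(g) is at most 1/√n. -/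
theorem norm_average_le_one_div_sqrt
    (n : ℕ) {Γ : Type*} [Group Γ] [Fintype Γ]
    (π : Γ →* Matrix.unitaryGroup (Fin n) ℂ) (hirr : IsIrreducibleRep π)
    (α : Γ → ℂ) (hα : ∀ g : Γ, ‖α g‖ ≤ 1) :
    ‖Matrix.toEuclideanCLM (𝕜 := ℂ)
        ((1 / (Fintype.card Γ : ℂ)) • ∑ g : Γ, α g • (π g : Matrix (Fin n) (Fin n) ℂ))‖ ≤
      1 / Real.sqrt n := by
  rcases Nat.eq_zero_or_pos n with rfl | hn
  -- On the zero space the operator norm is `0`, and `1 / √0 = 0`.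
  · refine ContinuousLinearMap.opNorm_le_bound _ (by simp) fun v => ?_
    simp [Subsingleton.elim _ (0 : EuclideanSpace ℂ (Fin 0))]
  have : NeZero n := ⟨hn.ne'⟩
  refine ContinuousLinearMap.opNorm_le_bound _ (by positivity) fun v => ?_
  have hcard : (0 : ℝ) < Fintype.card Γ := Nat.cast_pos.mpr Fintype.card_pos
  have h := norm_sum_smul_repOp_le hirr α hα v
  have heq : Matrix.toEuclideanCLM (𝕜 := ℂ)
      ((1 / (Fintype.card Γ : ℂ)) • ∑ g : Γ, α g • (π g : Matrix (Fin n) (Fin n) ℂ)) v =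
      (1 / (Fintype.card Γ : ℂ)) • ∑ g : Γ, α g • repOp π g v := by
    simp only [map_smul, map_sum, smul_apply, sum_apply,
      repOp]
  rw [heq, norm_smul]
  calc ‖1 / (Fintype.card Γ : ℂ)‖ * ‖∑ g : Γ, α g • repOp π g v‖
      ≤ 1 / (Fintype.card Γ : ℝ) * (Fintype.card Γ / Real.sqrt n * ‖v‖) := by
        rw [norm_div, norm_one, Complex.norm_natCast]
        gcongr
    _ = 1 / Real.sqrt n * ‖v‖ := by field_simp
end
end

section
/- Let X be a finite nonempty metric space and suppose there are R > 0 and κ > 1 such that |{x ∈ X : dist(x,A) ≤ R}| ≥ κ |A| for every subset A ⊂ X with 0 < |A| ≤ |X|/2. Then for all nonempty subsets A, B ⊂ X, one has min{ |A|/|X|, |B|/|X| } ≤ κ^{−dist(A,B)/(2R)}. -/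
/-!
Iterating the `R`-neighbourhood operation, a set multiplies its cardinality by `κ` at every step
that starts from at most half of the space. Put `k + 1 = ⌈dist(A,B) / (2R)⌉`. Since
`2kR < dist(A,B)`, the `k`-th iterated neighbourhoods of `A` and of `B` are disjoint, so one of
them fills at most half of the space. For the corresponding set all of the first `k + 1` steps
expand, and hence its density is at most `κ^{-(k+1)} ≤ κ^{-dist(A,B)/(2R)}`.
-/

noncomputable section

open scoped ENNReal

/-- The distance between two subsets of a metric space. -/
def setDist {X : Type*} [MetricSpace X] (A B : Set X) : ℝ :=
  sInf (Set.image2 dist A B)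

/-- The closed `R`-neighbourhood of a set, written so that it matches the expansion hypothesis
definitionally (in a finite space the distance to a nonempty set is attained). -/
def nbhd {X : Type*} [MetricSpace X] (R : ℝ) (S : Set X) : Set X :=
  {x : X | ∃ a ∈ S, dist x a ≤ R}

theorem subset_nbhd {X : Type*} [MetricSpace X] {R : ℝ} (hR : 0 < R) (S : Set X) :
    S ⊆ nbhd R S := fun x hx => ⟨x, hx, by simpa using hR.le⟩

theorem exists_dist_le_of_mem_iterate {X : Type*} [MetricSpace X] {R : ℝ} {S : Set X} (k : ℕ) :
    ∀ x ∈ (nbhd R)^[k] S, ∃ a ∈ S, dist x a ≤ k * R := by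
  induction k with
  | zero => exact fun x hx => ⟨x, hx, by simp⟩
  | succ k ih =>
    intro x hx
    rw [Function.iterate_succ_apply'] at hx
    obtain ⟨y, hy, hxy⟩ := hx
    obtain ⟨a, ha, hya⟩ := ih y hy
    refine ⟨a, ha, (dist_triangle x y a).trans ?_⟩
    push_cast
    linarith

theorem nonempty_iterate {X : Type*} [MetricSpace X] {R : ℝ} (hR : 0 < R) {S : Set X}
    (hS : S.Nonempty) (k : ℕ) : ((nbhd R)^[k] S).Nonempty := by
  induction k with
  | zero => exact hS
  | succ k ih =>
    rw [Function.iterate_succ_apply']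
    exact ih.mono (subset_nbhd hR _)

/-- If the `k`-th iterated neighbourhood is still at most half of the space, so are all earlier
ones, and therefore each of the first `k + 1` steps expands by the factor `κ`. -/
theorem pow_mul_ncard_le {X : Type*} [MetricSpace X] [Fintype X] {R κ : ℝ} (hR : 0 < R)
    (hκ : 1 < κ)
    (hexp : ∀ A : Set X, A.Nonempty → (A.ncard : ℝ) ≤ (Fintype.card X : ℝ) / 2 →
      κ * A.ncard ≤ ((nbhd R A).ncard : ℝ))
    {S : Set X} (hS : S.Nonempty) (k : ℕ)
    (hk : (((nbhd R)^[k] S).ncard : ℝ) ≤ (Fintype.card X : ℝ) / 2) :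
    κ ^ (k + 1) * S.ncard ≤ (((nbhd R)^[k + 1] S).ncard : ℝ) := by
  induction k with
  | zero => simpa using hexp S hS hk
  | succ k ih =>
    have hle : (((nbhd R)^[k] S).ncard : ℝ) ≤ ((nbhd R)^[k + 1] S).ncard := by
      rw [Function.iterate_succ_apply']
      exact_mod_cast Set.ncard_le_ncard (subset_nbhd hR _) (Set.toFinite _)
    have h1 := ih (hle.trans hk)
    have h2 := hexp _ (nonempty_iterate hR hS (k + 1)) hk
    rw [Function.iterate_succ_apply' (nbhd R) (k + 1)]
    calc κ ^ (k + 1 + 1) * (S.ncard : ℝ) = κ * (κ ^ (k + 1) * S.ncard) := by ring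
      _ ≤ κ * ((nbhd R)^[k + 1] S).ncard := by gcongr
      _ ≤ _ := h2

/-- In a finite metric space with R-expansion constant κ > 1, any two nonempty subsets
A, B satisfy min(|A|/|X|, |B|/|X|) ≤ κ^{−dist(A,B)/(2R)}. -/
theorem expander_min_card_le_rpow
    (X : Type*) [MetricSpace X] [Fintype X] [Nonempty X]
    (R κ : ℝ) (hR : 0 < R) (hκ : 1 < κ)
    (hexp : ∀ A : Set X, A.Nonempty → (A.ncard : ℝ) ≤ (Fintype.card X : ℝ) / 2 →
      κ * A.ncard ≤ (({x : X | ∃ a ∈ A, dist x a ≤ R}).ncard : ℝ))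
    (A B : Set X) (hA : A.Nonempty) (hB : B.Nonempty) :
    min ((A.ncard : ℝ) / (Fintype.card X : ℝ)) ((B.ncard : ℝ) / (Fintype.card X : ℝ)) ≤
      κ ^ (-(setDist A B) / (2 * R)) := by
  have hn : (0 : ℝ) < Fintype.card X := by exact_mod_cast Fintype.card_pos
  have hκ0 : 0 < κ := by linarith
  have hcard : ∀ S : Set X, (S.ncard : ℝ) ≤ Fintype.card X := fun S => by
    rw [← Nat.card_eq_fintype_card]
    exact_mod_cast Set.ncard_le_card S
  have hD : ∀ a ∈ A, ∀ b ∈ B, setDist A B ≤ dist a b := fun a ha b hb =>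
    csInf_le ⟨0, by rintro _ ⟨x, _, y, _, rfl⟩; exact dist_nonneg⟩ ⟨a, ha, b, hb, rfl⟩
  generalize setDist A B = D at hD ⊢
  rcases le_or_gt D 0 with h0 | h0
  · have hone : 1 ≤ κ ^ (-D / (2 * R)) :=
      Real.one_le_rpow hκ.le (div_nonneg (by linarith) (by linarith))
    exact (min_le_left _ _).trans (((div_le_one hn).2 (hcard A)).trans hone)
  have hpos : 0 < D / (2 * R) := by positivity
  obtain ⟨k, hk⟩ : ∃ k, ⌈D / (2 * R)⌉₊ = k + 1 :=
    Nat.exists_eq_succ_of_ne_zero (Nat.ceil_pos.2 hpos).ne'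
  have hle : D / (2 * R) ≤ k + 1 := by
    have := Nat.le_ceil (D / (2 * R))
    rw [hk] at this
    exact_mod_cast this
  have hlt : 2 * (k * R) < D := by
    have : (k : ℝ) < D / (2 * R) := Nat.lt_ceil.1 (by omega)
    rw [lt_div_iff₀ (by positivity)] at this
    linarith
  have key : ∀ S : Set X, S.Nonempty →
      (((nbhd R)^[k] S).ncard : ℝ) ≤ (Fintype.card X : ℝ) / 2 →
      (S.ncard : ℝ) / Fintype.card X ≤ κ ^ (-D / (2 * R)) := by
    intro S hS hSk
    have h1 := (pow_mul_ncard_le hR hκ hexp hS k hSk).trans (hcard _)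
    have h2 : κ ^ (D / (2 * R)) ≤ κ ^ (k + 1) := by
      rw [← Real.rpow_natCast]
      exact Real.rpow_le_rpow_of_exponent_le hκ.le (by exact_mod_cast hle)
    rw [neg_div, Real.rpow_neg hκ0.le, div_le_iff₀ hn,
      le_inv_mul_iff₀ (Real.rpow_pos_of_pos hκ0 _)]
    exact (mul_le_mul_of_nonneg_right h2 (Nat.cast_nonneg _)).trans h1
  have hdisj : Disjoint ((nbhd R)^[k] A) ((nbhd R)^[k] B) := by
    rw [Set.disjoint_left]
    intro x hxA hxB
    obtain ⟨a, ha, hxa⟩ := exists_dist_le_of_mem_iterate k x hxA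
    obtain ⟨b, hb, hxb⟩ := exists_dist_le_of_mem_iterate k x hxB
    have := hD a ha b hb
    have := dist_triangle_left a b x
    linarith
  have hsum : (((nbhd R)^[k] A).ncard : ℝ) + ((nbhd R)^[k] B).ncard ≤ Fintype.card X := by
    have := hcard ((nbhd R)^[k] A ∪ (nbhd R)^[k] B)
    rw [Set.ncard_union_eq hdisj (Set.toFinite _) (Set.toFinite _)] at this
    exact_mod_cast this
  rcases le_total (((nbhd R)^[k] A).ncard : ℝ) ((Fintype.card X : ℝ) / 2) with h | h
  · exact (min_le_left _ _).trans (key A hA h)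
  · exact (min_le_right _ _).trans (key B hB (by linarith))
end
end
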